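/- With notation as in the interval construction, the map h : K → K defined by h(x)(k) = I_k \ x(k) is a homeomorphism satisfying a^{h(x)}ₙ = −aˣₙ for all n; consequently h maps Inf_A = { x : ∑_{n∈A} aˣₙ = +∞ } into its complement, and hence Inf_A is not comeager in K. -/

import Mathlib

/-!
Complementation in each block, `h(x)(k) = I_k \ x(k)`, is a continuous involution of the compact
product `K` and flips the sign of every term of the associated series (`aOf_flip`). Hence if the
subseries of `x` over `A` diverges to `+∞`, that of `h x` diverges to `-∞`, so `InfDiv A` and its
preimage under `h` are disjoint. A homeomorphism preserves residual sets, so if `InfDiv A` were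
residual, two disjoint sets would be residual in `K`; this contradicts the Baire category theorem,
which applies because `K` is a nonempty compact Hausdorff space.
-/

open Filter Topology

/-- Partial sums of the subseries of `a` over the set `A`, up to index `m`. -/
noncomputable def psum (a : ℕ → ℝ) (A : Set ℕ) (m : ℕ) : ℝ :=
  ∑ n ∈ Finset.range (m + 1), Set.indicator A a n

/-- A series `∑ aₙ` is conditionally convergent: its partial sums converge
but the partial sums of `∑ |aₙ|` tend to infinity. -/
def CondConv (a : ℕ → ℝ) : Prop :=
  (∃ L : ℝ, Tendsto (fun m => ∑ n ∈ Finset.range m, a n) atTop (𝓝 L)) ∧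
  Tendsto (fun m => ∑ n ∈ Finset.range m, |a n|) atTop atTop

/-- The `k`-th interval `I_k` (of length `2k`, for `k ≥ 1`). -/
def Ik (k : ℕ) : Finset ℕ := Finset.Icc (k * (k - 1) + 1) (k * (k + 1))

/-- `D k` is the (finite, discrete) set of `k`-element subsets of `I_k`. -/
def D (k : ℕ) : Type := {s : Finset ℕ // s ⊆ Ik k ∧ s.card = k}

instance (k : ℕ) : TopologicalSpace (D k) := ⊥

instance (k : ℕ) : DiscreteTopology (D k) := ⟨rfl⟩

/-- The product space `K = ∏ₖ D k`. -/
def K : Type := Π k, D k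

instance : TopologicalSpace K := by unfold K; infer_instance

open scoped Classical in
/-- The series associated to `x ∈ K`: on `I_k` it is `1/k²` at coordinates in `x k`
and `-1/k²` elsewhere (and `0` off the intervals, i.e. at `n = 0`). -/
noncomputable def aOf (x : K) (n : ℕ) : ℝ :=
  if h : ∃ k, n ∈ Ik k then
    (if n ∈ (x h.choose).1 then 1 / (h.choose : ℝ) ^ 2
     else -1 / (h.choose : ℝ) ^ 2)
  else 0

/-- `Inf_A`: the set of `x ∈ K` whose subseries over `A` diverges to `+∞`. -/
def InfDiv (A : Set ℕ) : Set K :=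
  {x | Tendsto (fun m => ∑ n ∈ Finset.range (m + 1), Set.indicator A (aOf x) n)
        atTop atTop}

lemma card_Ik (k : ℕ) : (Ik k).card = 2 * k := by
  rw [Ik, Nat.card_Icc]
  rcases k with _ | k
  · rfl
  · simp only [Nat.add_sub_cancel]
    have : (k + 1) * (k + 1 + 1) = (k + 1) * k + 2 * (k + 1) := by ring
    omega

/-- Complementation inside the block `I_k`; it stays in `D k` because `I_k` has `2 * k` elements. -/
def flipD (k : ℕ) (s : D k) : D k :=
  ⟨Ik k \ s.1, Finset.sdiff_subset, by
    rw [Finset.card_sdiff_of_subset s.2.1, card_Ik, s.2.2]; omega⟩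

lemma flipD_flipD (k : ℕ) (s : D k) : flipD k (flipD k s) = s :=
  Subtype.ext (Finset.sdiff_sdiff_eq_self s.2.1)

/-- The involution `h` of `K`: complementation in every block at once. -/
def flipK (x : K) : K := fun k => flipD k (x k)

lemma flipK_flipK (x : K) : flipK (flipK x) = x :=
  funext fun k => flipD_flipD k (x k)

lemma continuous_flipK : Continuous flipK := by
  -- `K` carries, definitionally, the product topology, but instances do not see through `K`.
  have h : Continuous (fun (x : Π k, D k) k => flipD k (x k)) :=
    continuous_pi fun k =>
      (continuous_of_discreteTopology (f := flipD k)).comp (continuous_apply k)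
  exact h

/-- `flipK` as a homeomorphism, being a continuous involution. -/
def flipHomeo : K ≃ₜ K where
  toFun := flipK
  invFun := flipK
  left_inv := flipK_flipK
  right_inv := flipK_flipK
  continuous_toFun := continuous_flipK
  continuous_invFun := continuous_flipK

lemma aOf_flip (x : K) (n : ℕ) : aOf (flipK x) n = -aOf x n := by
  unfold aOf
  split_ifs with h h1 h2 h2
  · exact absurd h2 (Finset.mem_sdiff.1 h1).2
  · ring
  · ring
  · exact absurd (Finset.mem_sdiff.2 ⟨h.choose_spec, h2⟩) h1
  · simp

instance (k : ℕ) : Finite (D k) :=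
  Set.Finite.to_subtype (s := {s : Finset ℕ | s ⊆ Ik k ∧ s.card = k})
    ((Ik k).powerset.finite_toSet.subset fun _ hs => Finset.mem_coe.2 (Finset.mem_powerset.2 hs.1))

instance (k : ℕ) : Nonempty (D k) := by
  obtain ⟨s, hs, hc⟩ := Finset.exists_subset_card_eq (s := Ik k) (n := k)
    (by rw [card_Ik]; omega)
  exact ⟨⟨s, hs, hc⟩⟩

instance : Nonempty K := inferInstanceAs (Nonempty (Π k, D k))

instance : BaireSpace K := by
  have h : BaireSpace (Π k, D k) := inferInstance
  exact h

lemma flipK_notMem_InfDiv {A : Set ℕ} {x : K} (hx : x ∈ InfDiv A) : flipK x ∉ InfDiv A := by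
  intro hy
  have hneg : (fun m => ∑ n ∈ Finset.range (m + 1), Set.indicator A (aOf (flipK x)) n) =
      fun m => -∑ n ∈ Finset.range (m + 1), Set.indicator A (aOf x) n := by
    funext m
    rw [← Finset.sum_neg_distrib]
    refine Finset.sum_congr rfl fun n _ => ?_
    by_cases hn : n ∈ A <;> simp [hn, aOf_flip]
  have hbot : Tendsto (fun m => ∑ n ∈ Finset.range (m + 1),
      Set.indicator A (aOf (flipK x)) n) atTop atBot := by
    rw [hneg]
    exact tendsto_neg_atTop_atBot.comp hx
  exact hbot.not_tendsto disjoint_atBot_atTop hy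

theorem stmt9 :
    ∃ h : K ≃ₜ K,
      (∀ (x : K) (k : ℕ), ((h x) k).1 = Ik k \ (x k).1) ∧
      (∀ (x : K) (n : ℕ), aOf (h x) n = - aOf x n) ∧
      (∀ A : Set ℕ, (h '' InfDiv A ⊆ (InfDiv A)ᶜ) ∧ InfDiv A ∉ residual K) := by
  refine ⟨flipHomeo, fun _ _ => rfl, aOf_flip, fun A => ⟨?_, fun hA => ?_⟩⟩
  · rintro _ ⟨x, hx, rfl⟩
    exact flipK_notMem_InfDiv hx
  · have hpre : flipHomeo ⁻¹' InfDiv A ∈ residual K := by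
      rw [← flipHomeo.residual_map_eq] at hA
      exact hA
    obtain ⟨x, hx, hx'⟩ := (dense_of_mem_residual (inter_mem hA hpre)).nonempty
    exact flipK_notMem_InfDiv hx hx'
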